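/- Let ℓ ≥ 1 be fixed and let a_1,…,a_ℓ be fixed distinct integers. Let X ≥ 2 and let h be an integer with 1 ≤ h ≤ X and h ≠ a_j for all 1 ≤ j ≤ ℓ. Let I ⊂ [1,X] be any set of primes, and let N be the set of positive integers having no prime factor in I. Then Σ_{n≤X} 1_N(n+h) Λ(n+a_1)⋯Λ(n+a_ℓ) ≪ X · Π_{j=1}^ℓ ( |h−a_j| / φ(|h−a_j|) )^{2^{ℓ+1}} · Π_{p ∈ I} (1 − 1/p), with implied constant depending only on ℓ and the a_j. -/

import Mathlib

open ArithmeticFunction Finset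

/-- `|m|/φ(|m|)`, with the convention that this is `0` when `m = 0`
(note `φ(0) = 0` and `0/0 = 0` in Lean, so no case split is needed). -/
noncomputable def totientRatio (m : ℤ) : ℝ :=
  (m.natAbs : ℝ) / (m.natAbs.totient : ℝ)

/-- The alternating sum of `(-1)^|d|` over the interval `u ⊆ d ⊆ l` vanishes unless `u = l`. -/
theorem sum_neg_one_pow_card_between {u l : Finset ℕ} (hul : u ⊆ l) :
    ∑ d ∈ l.powerset with u ⊆ d, (-1 : ℝ) ^ #d = if u = l then (-1) ^ #u else 0 := by
  have himage : {d ∈ l.powerset | u ⊆ d} = (l \ u).powerset.image (u ∪ ·) := by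
    rw [← Finset.Icc_eq_image_powerset hul]
    ext d
    simp [and_comm]
  have hinj : Set.InjOn (u ∪ ·) ((l \ u).powerset : Set (Finset ℕ)) := by
    intro s hs t ht hst
    simp only [coe_powerset, Set.mem_preimage, Set.mem_powerset_iff, coe_subset,
      subset_sdiff] at hs ht
    calc s = (u ∪ s) \ u := (union_sdiff_cancel_left hs.2.symm).symm
      _ = (u ∪ t) \ u := by rw [show u ∪ s = u ∪ t from hst]
      _ = t := union_sdiff_cancel_left ht.2.symm
  rw [himage, sum_image hinj]
  have hcard : ∀ s ∈ (l \ u).powerset, (-1 : ℝ) ^ #(u ∪ s) = (-1) ^ #u * (-1) ^ #s := by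
    intro s hs
    rw [mem_powerset, subset_sdiff] at hs
    rw [card_union_of_disjoint hs.2.symm, pow_add]
  have hsum : ∑ s ∈ (l \ u).powerset, (-1 : ℝ) ^ #s = if l \ u = ∅ then 1 else 0 := by
    exact_mod_cast congrArg (Int.cast : ℤ → ℝ) (sum_powerset_neg_one_pow_card (x := l \ u))
  rw [sum_congr rfl hcard, ← mul_sum, hsum, mul_ite, mul_one, mul_zero]
  refine if_congr ?_ rfl rfl
  rw [sdiff_eq_empty_iff_subset]
  exact ⟨fun h => hul.antisymm h, fun h => h ▸ subset_rfl⟩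

/-- **Selberg's upper bound sieve** in subset form. The sifting conditions are indexed by `P`, the
element `n` of `A` violates the conditions in `F n`, and `ν p` is the approximate density of the
elements violating `p`. The level is described by a family `D` of subsets of `P` closed under
taking subsets. -/
theorem selberg_sieve_subsets {α : Type*} (A : Finset α) (F : α → Finset ℕ) (P : Finset ℕ)
    (ν : ℕ → ℝ) (hν0 : ∀ p ∈ P, 0 < ν p) (hν1 : ∀ p ∈ P, ν p < 1)
    (D : Finset (Finset ℕ)) (hDP : ∀ d ∈ D, d ⊆ P) (hD0 : ∅ ∈ D)
    (hDdown : ∀ d ∈ D, ∀ u ⊆ d, u ∈ D) (N M E : ℝ)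
    (hM : ∀ d ∈ D, (∏ p ∈ d, ν p)⁻¹ ≤ M)
    (hE : ∀ d ∈ D, ∀ e ∈ D,
      |(#{a ∈ A | d ∪ e ⊆ F a} : ℝ) - N * ∏ p ∈ d ∪ e, ν p| ≤ E) :
    (#{a ∈ A | Disjoint P (F a)} : ℝ) ≤
      N / (∑ d ∈ D, ∏ p ∈ d, ν p / (1 - ν p)) + (#D : ℝ) ^ 2 * (M ^ 2 * E) := by
  set g : Finset ℕ → ℝ := fun d => ∏ p ∈ d, ν p / (1 - ν p) with hg
  set V : Finset ℕ → ℝ := fun d => ∏ p ∈ d, ν p with hV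
  set S : ℝ := ∑ d ∈ D, g d with hS
  have hVpos : ∀ d ∈ D, 0 < V d := fun d hd => prod_pos fun p hp => hν0 p (hDP d hd hp)
  have hgpos : ∀ d ∈ D, 0 < g d := fun d hd => prod_pos fun p hp =>
    div_pos (hν0 p (hDP d hd hp)) (sub_pos.2 (hν1 p (hDP d hd hp)))
  have hSpos : 0 < S := sum_pos hgpos ⟨∅, hD0⟩
  have hVinv : ∀ d ∈ D, (V d)⁻¹ = ∑ u ∈ D, if u ⊆ d then (g u)⁻¹ else 0 := by
    intro d hd
    have hfac : ∀ p ∈ d, (ν p)⁻¹ = (ν p / (1 - ν p))⁻¹ + 1 := by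
      intro p hp
      have h0 := hν0 p (hDP d hd hp)
      field_simp
      ring
    have hfilter : {u ∈ D | u ⊆ d} = d.powerset := by
      ext u
      simp only [mem_filter, mem_powerset]
      exact ⟨fun h => h.2, fun h => ⟨hDdown d hd u h, h⟩⟩
    rw [← sum_filter, hfilter, hV, ← prod_inv_distrib, prod_congr rfl hfac, prod_add]
    simp [hg]
  set w : Finset ℕ → ℝ := fun d =>
    (-1) ^ #d * (V d)⁻¹ * S⁻¹ * ∑ l ∈ D with d ⊆ l, g l with hw
  have hwempty : w ∅ = 1 := by
    simp [hw, hV, ← hS, hSpos.ne']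
  have hwabs : ∀ d ∈ D, |w d| ≤ M := by
    intro d hd
    have hle : ∑ l ∈ D with d ⊆ l, g l ≤ S :=
      sum_le_sum_of_subset_of_nonneg (filter_subset _ _) fun l hl _ => (hgpos l hl).le
    have hnonneg : 0 ≤ ∑ l ∈ D with d ⊆ l, g l :=
      sum_nonneg fun l hl => (hgpos l (mem_filter.1 hl).1).le
    have hVi : 0 < (V d)⁻¹ := inv_pos.2 (hVpos d hd)
    rw [hw]
    simp only [abs_mul, abs_pow, abs_neg, abs_one, one_pow, one_mul, abs_of_pos hVi,
      abs_of_pos (inv_pos.2 hSpos), abs_of_nonneg hnonneg]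
    calc (V d)⁻¹ * S⁻¹ * ∑ l ∈ D with d ⊆ l, g l ≤ (V d)⁻¹ * S⁻¹ * S := by gcongr
      _ = (V d)⁻¹ := by field_simp
      _ ≤ M := hM d hd
  have hM0 : 0 ≤ M := (abs_nonneg _).trans (hwabs ∅ hD0)
  have hy : ∀ u ∈ D, (∑ d ∈ D, if u ⊆ d then V d * w d else 0) = S⁻¹ * ((-1) ^ #u * g u) := by
    intro u hu
    calc (∑ d ∈ D, if u ⊆ d then V d * w d else 0)
        = ∑ d ∈ D, ∑ l ∈ D, if u ⊆ d ∧ d ⊆ l then S⁻¹ * (g l * (-1) ^ #d) else 0 := by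
          refine sum_congr rfl fun d hd => ?_
          have := (hVpos d hd).ne'
          by_cases hud : u ⊆ d
          · simp only [hud, if_true, true_and, hw, sum_filter, mul_sum]
            refine sum_congr rfl fun l _ => ?_
            split_ifs
            · field_simp
            · simp
          · simp [hud]
      _ = ∑ l ∈ D, if u ⊆ l then S⁻¹ * (g l * if u = l then (-1) ^ #u else 0) else 0 := by
          rw [sum_comm]
          refine sum_congr rfl fun l hl => ?_
          have hfilter : {d ∈ D | u ⊆ d ∧ d ⊆ l} = {d ∈ l.powerset | u ⊆ d} := by
            ext d
            simp only [mem_filter, mem_powerset]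
            exact ⟨fun h => ⟨h.2.2, h.2.1⟩, fun h => ⟨hDdown l hl d h.1, h.2, h.1⟩⟩
          rw [← sum_filter, hfilter, ← mul_sum, ← mul_sum]
          split_ifs with hul
          · rw [sum_neg_one_pow_card_between hul, if_pos ‹_›]
          · rw [sum_neg_one_pow_card_between hul, if_neg ‹_›]
          · have : {d ∈ l.powerset | u ⊆ d} = ∅ := by
              ext d
              simp only [mem_filter, mem_powerset, notMem_empty, iff_false, not_and]
              exact fun h h' => hul (h'.trans h)
            simp [this]
      _ = S⁻¹ * ((-1) ^ #u * g u) := by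
          rw [sum_eq_single_of_mem u hu]
          · simp [mul_comm]
          · intro l _ hlu
            simp [hlu.symm]
  have hmain : ∑ d ∈ D, ∑ e ∈ D, w d * w e * V (d ∪ e) = S⁻¹ := by
    calc ∑ d ∈ D, ∑ e ∈ D, w d * w e * V (d ∪ e)
        = ∑ d ∈ D, ∑ e ∈ D, ∑ u ∈ D, (g u)⁻¹ * ((if u ⊆ d then V d * w d else 0) *
            (if u ⊆ e then V e * w e else 0)) := by
          refine sum_congr rfl fun d hd => sum_congr rfl fun e he => ?_
          have hde : d ∩ e ∈ D := hDdown d hd _ inter_subset_left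
          have hmul : V (d ∪ e) = V d * V e * (V (d ∩ e))⁻¹ := by
            rw [eq_mul_inv_iff_mul_eq₀ (hVpos _ hde).ne']
            exact prod_union_inter
          rw [hmul, hVinv _ hde, mul_sum, mul_sum]
          refine sum_congr rfl fun u _ => ?_
          by_cases h1 : u ⊆ d <;> by_cases h2 : u ⊆ e <;> simp [subset_inter_iff, h1, h2]
          ring
      _ = ∑ u ∈ D, (g u)⁻¹ * (∑ d ∈ D, if u ⊆ d then V d * w d else 0) ^ 2 := by
          rw [sum_congr rfl fun d _ => sum_comm, sum_comm]
          refine sum_congr rfl fun u _ => ?_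
          rw [sq, sum_mul_sum, mul_sum]
          simp_rw [mul_sum]
      _ = ∑ u ∈ D, S⁻¹ ^ 2 * g u := by
          refine sum_congr rfl fun u hu => ?_
          have := (hgpos u hu).ne'
          rw [hy u hu, mul_pow, mul_pow, ← pow_mul, mul_comm (#u) 2, pow_mul]
          field_simp
          simp
      _ = S⁻¹ := by
          rw [← mul_sum, ← hS]
          field_simp
  have hsquare : (#{a ∈ A | Disjoint P (F a)} : ℝ) ≤
      ∑ a ∈ A, (∑ d ∈ D with d ⊆ F a, w d) ^ 2 := by
    rw [← sum_boole]
    refine sum_le_sum fun a _ => ?_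
    split_ifs with ha
    · have hfilter : {d ∈ D | d ⊆ F a} = {∅} := by
        ext d
        simp only [mem_filter, mem_singleton]
        refine ⟨fun h => ?_, fun h => by simp [h, hD0]⟩
        exact disjoint_self_iff_empty d |>.1 (ha.mono (hDP d h.1) h.2)
      simp [hfilter, hwempty]
    · positivity
  have hexpand : ∑ a ∈ A, (∑ d ∈ D with d ⊆ F a, w d) ^ 2 =
      ∑ d ∈ D, ∑ e ∈ D, w d * w e * (#{a ∈ A | d ∪ e ⊆ F a} : ℝ) := by
    simp_rw [sq, sum_filter, sum_mul_sum]
    rw [sum_comm]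
    refine sum_congr rfl fun d _ => ?_
    rw [sum_comm]
    refine sum_congr rfl fun e _ => ?_
    rw [← sum_boole, mul_sum]
    refine sum_congr rfl fun a _ => ?_
    by_cases h1 : d ⊆ F a <;> by_cases h2 : e ⊆ F a <;> simp [union_subset_iff, h1, h2]
  calc (#{a ∈ A | Disjoint P (F a)} : ℝ)
      ≤ ∑ d ∈ D, ∑ e ∈ D, w d * w e * (#{a ∈ A | d ∪ e ⊆ F a} : ℝ) := hexpand ▸ hsquare
    _ = ∑ d ∈ D, ∑ e ∈ D, (N * (w d * w e * V (d ∪ e)) +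
          w d * w e * ((#{a ∈ A | d ∪ e ⊆ F a} : ℝ) - N * V (d ∪ e))) := by
        refine sum_congr rfl fun d _ => sum_congr rfl fun e _ => ?_
        ring
    _ ≤ ∑ d ∈ D, ∑ e ∈ D, (N * (w d * w e * V (d ∪ e)) + M ^ 2 * E) := by
        refine sum_le_sum fun d hd => sum_le_sum fun e he => ?_
        refine add_le_add le_rfl ((le_abs_self _).trans ?_)
        rw [abs_mul, abs_mul, sq]
        exact mul_le_mul (mul_le_mul (hwabs d hd) (hwabs e he) (abs_nonneg _) hM0) (hE d hd e he)
          (abs_nonneg _) (by positivity)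
    _ = N / S + (#D : ℝ) ^ 2 * (M ^ 2 * E) := by
        simp_rw [sum_add_distrib, ← mul_sum, hmain]
        simp only [sum_const, nsmul_eq_mul]
        ring

/-- Chinese remainder count of the residues satisfying a system of congruence conditions. -/
theorem card_range_prod_filter_mod_mem (d : Finset ℕ) (hd : ∀ p ∈ d, p.Prime)
    (Ω : ℕ → Finset ℕ) (hΩ : ∀ p ∈ d, Ω p ⊆ range p) :
    #{n ∈ range (∏ p ∈ d, p) | ∀ p ∈ d, n % p ∈ Ω p} = ∏ p ∈ d, #(Ω p) := by
  induction d using Finset.induction_on with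
  | empty => simp
  | insert p d hpd ih =>
    have hp : p.Prime := hd p (mem_insert_self p d)
    have hd' : ∀ q ∈ d, q.Prime := fun q hq => hd q (mem_insert_of_mem hq)
    have hcop : Nat.Coprime p (∏ q ∈ d, q) := Nat.Coprime.prod_right fun q hq =>
      (Nat.coprime_primes hp (hd' q hq)).2 fun h => hpd (h ▸ hq)
    have hm : 0 < ∏ q ∈ d, q := prod_pos fun q hq => (hd' q hq).pos
    rw [prod_insert hpd, prod_insert hpd,
      ← ih hd' fun q hq => hΩ q (mem_insert_of_mem hq), ← card_product]
    have hmod : ∀ n, ∀ q ∈ d, n % (∏ q ∈ d, q) % q = n % q := fun n q hq =>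
      Nat.mod_mod_of_dvd n (dvd_prod_of_mem _ hq)
    refine card_nbij' (fun n => (n % p, n % ∏ q ∈ d, q))
      (fun x => (Nat.chineseRemainder hcop x.1 x.2 : ℕ)) ?_ ?_ ?_ ?_
    · intro n hn
      simp only [coe_filter, mem_range, Set.mem_ofPred_eq, forall_mem_insert] at hn
      simp only [coe_product, coe_filter, Set.mem_prod, mem_coe, mem_range, Set.mem_ofPred_eq]
      exact ⟨hn.2.1, Nat.mod_lt _ hm, fun q hq => by rw [hmod n q hq]; exact hn.2.2 q hq⟩
    · rintro ⟨x, y⟩ hxy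
      simp only [coe_product, coe_filter, Set.mem_prod, mem_coe, mem_range,
        Set.mem_ofPred_eq] at hxy
      simp only [coe_filter, mem_range, Set.mem_ofPred_eq, forall_mem_insert]
      obtain ⟨hx, hy, hyd⟩ := hxy
      have hxp : x < p := mem_range.1 (hΩ p (mem_insert_self p d) hx)
      have hcr := (Nat.chineseRemainder hcop x y).2
      refine ⟨Nat.chineseRemainder_lt_mul hcop x y hp.ne_zero hm.ne', ?_, fun q hq => ?_⟩
      · rw [show _ % p = x % p from hcr.1, Nat.mod_eq_of_lt hxp]
        exact hx
      · rw [← hmod _ q hq, show _ % (∏ q ∈ d, q) = y % _ from hcr.2, hmod _ q hq]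
        exact hyd q hq
    · intro n hn
      simp only [coe_filter, mem_range, Set.mem_ofPred_eq] at hn
      have hcr := Nat.chineseRemainder_modEq_unique hcop (a := n % p) (b := n % ∏ q ∈ d, q)
        (z := n) (Nat.mod_modEq n _).symm (Nat.mod_modEq n _).symm
      rw [Nat.ModEq, Nat.mod_eq_of_lt hn.1, Nat.mod_eq_of_lt
        (Nat.chineseRemainder_lt_mul hcop _ _ hp.ne_zero hm.ne')] at hcr
      exact hcr.symm
    · rintro ⟨x, y⟩ hxy
      simp only [coe_product, coe_filter, Set.mem_prod, mem_coe, mem_range,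
        Set.mem_ofPred_eq] at hxy
      obtain ⟨hx, hy, -⟩ := hxy
      have hxp : x < p := mem_range.1 (hΩ p (mem_insert_self p d) hx)
      have hcr := (Nat.chineseRemainder hcop x y).2
      exact Prod.ext (Eq.trans hcr.1 (Nat.mod_eq_of_lt hxp)) (Eq.trans hcr.2 (Nat.mod_eq_of_lt hy))

/-- A periodic predicate is satisfied in an interval with the expected frequency, up to an error
bounded by the number of solutions in one period. -/
theorem abs_card_Ico_filter_sub_le_of_periodic (Q : ℕ → Prop) [DecidablePred Q] {m : ℕ}
    (hm : 0 < m) (hQ : Function.Periodic Q m) (N : ℕ) :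
    |(#{n ∈ Ico 1 (1 + N) | Q n} : ℝ) - N * (#{n ∈ range m | Q n} / m)| ≤
      #{n ∈ range m | Q n} := by
  have hperiod : ∀ k, #{n ∈ Ico k (k + m) | Q n} = #{n ∈ range m | Q n} := fun k => by
    rw [Nat.filter_Ico_card_eq_of_periodic k m Q hQ, Nat.count_eq_card_filter_range]
  have hm' : (0 : ℝ) < m := by exact_mod_cast hm
  induction N using Nat.strong_induction_on with
  | _ N ih =>
    rcases lt_or_ge N m with hN | hN
    · have h1 : #{n ∈ Ico 1 (1 + N) | Q n} ≤ #{n ∈ range m | Q n} := by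
        rw [← hperiod 1]
        exact card_le_card (filter_subset_filter _ (Ico_subset_Ico_right (by lia)))
      have h1' : (#{n ∈ Ico 1 (1 + N) | Q n} : ℝ) ≤ #{n ∈ range m | Q n} := by
        exact_mod_cast h1
      have h2 : (N : ℝ) * (#{n ∈ range m | Q n} / m) ≤ #{n ∈ range m | Q n} := by
        calc (N : ℝ) * (#{n ∈ range m | Q n} / m) ≤ m * (#{n ∈ range m | Q n} / m) := by gcongr
          _ = _ := by field_simp
      have h3 : 0 ≤ (N : ℝ) * (#{n ∈ range m | Q n} / m) := by positivity
      have h4 : (0 : ℝ) ≤ #{n ∈ Ico 1 (1 + N) | Q n} := by positivity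
      rw [abs_le]
      constructor <;> linarith
    · obtain ⟨k, rfl⟩ := Nat.exists_eq_add_of_le' hN
      have hsplit : #{n ∈ Ico 1 (1 + (k + m)) | Q n} =
          #{n ∈ Ico 1 (1 + k) | Q n} + #{n ∈ range m | Q n} := by
        rw [← hperiod (1 + k), ← card_union_of_disjoint, ← filter_union, add_assoc,
          Ico_union_Ico_eq_Ico (by lia) (by lia)]
        exact disjoint_filter_filter (Ico_disjoint_Ico_consecutive _ _ _)
      have := ih k (by lia)
      rw [hsplit]
      push_cast
      convert this using 2
      field_simp
      ring

/-- Counting the integers up to `N` that satisfy congruence conditions modulo distinct primes. -/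
theorem abs_card_filter_mod_mem_sub_le (d : Finset ℕ) (hd : ∀ p ∈ d, p.Prime)
    (Ω : ℕ → Finset ℕ) (hΩ : ∀ p ∈ d, Ω p ⊆ range p) (N : ℕ) :
    |(#{n ∈ Icc 1 N | ∀ p ∈ d, n % p ∈ Ω p} : ℝ) - N * ∏ p ∈ d, (#(Ω p) : ℝ) / p| ≤
      ∏ p ∈ d, (p : ℝ) := by
  have hm : 0 < ∏ p ∈ d, p := prod_pos fun q hq => (hd q hq).pos
  have hper : Function.Periodic (fun n => ∀ p ∈ d, n % p ∈ Ω p) (∏ p ∈ d, p) := by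
    intro n
    refine propext <| forall₂_congr fun p hp => ?_
    rw [Nat.add_mod, Nat.mod_eq_zero_of_dvd (dvd_prod_of_mem _ hp), add_zero, Nat.mod_mod]
  have h := abs_card_Ico_filter_sub_le_of_periodic _ hm hper N
  rw [card_range_prod_filter_mod_mem d hd Ω hΩ] at h
  push_cast at h
  rw [add_comm 1 N, Ico_add_one_right_eq_Icc] at h
  rw [prod_div_distrib]
  refine h.trans (prod_le_prod (fun _ _ => by positivity) fun p hp => ?_)
  exact_mod_cast (card_le_card (hΩ p hp)).trans_eq (card_range p)

theorem sum_log_primeFactors_le_log {m : ℕ} (hm : m ≠ 0) :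
    ∑ p ∈ m.primeFactors, Real.log p ≤ Real.log m := by
  have hpos : 0 < ∏ p ∈ m.primeFactors, p := prod_pos fun p hp => Nat.pos_of_mem_primeFactors hp
  rw [← Real.log_prod fun p hp => by
    exact_mod_cast (Nat.pos_of_mem_primeFactors hp).ne']
  rw [← Nat.cast_prod]
  refine Real.log_le_log (by exact_mod_cast hpos) ?_
  exact_mod_cast Nat.le_of_dvd (Nat.pos_of_ne_zero hm) (Nat.prod_primeFactors_dvd m)

/-- A weak form of Mertens' first theorem. -/
theorem sum_log_div_le_two_mul_log {Q : Finset ℕ} {z : ℝ} (hz : 1 ≤ z)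
    (hQ : ∀ p ∈ Q, p.Prime ∧ (p : ℝ) ≤ z) :
    ∑ p ∈ Q, Real.log p / p ≤ 2 * Real.log z := by
  set n := ⌊z⌋₊ with hn
  have hn1 : 1 ≤ n := Nat.one_le_floor_iff _ |>.2 hz
  have hn0 : (0 : ℝ) < n := by exact_mod_cast hn1
  have hQn : ∀ p ∈ Q, p ≤ n := fun p hp => Nat.le_floor (hQ p hp).2
  have hlower : ∀ p ∈ Q, (n : ℝ) / 2 * (Real.log p / p) ≤
      ∑ m ∈ Ioc 0 n, if p ∣ m then Real.log p else 0 := by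
    intro p hp
    have hp0 : 0 < p := (hQ p hp).1.pos
    have hp0' : (0 : ℝ) < p := by exact_mod_cast hp0
    rw [← sum_filter, sum_const, Nat.Ioc_filter_dvd_card_eq_div, nsmul_eq_mul]
    have h1 : 1 ≤ n / p := (Nat.one_le_div_iff hp0).2 (hQn p hp)
    have h2 : n < p * (n / p + 1) := Nat.lt_mul_div_succ n hp0
    have h3 : n ≤ 2 * (p * (n / p)) := by nlinarith
    have h4 : (n : ℝ) / (2 * p) ≤ ((n / p : ℕ) : ℝ) := by
      rw [div_le_iff₀ (by positivity)]
      have : (n : ℝ) ≤ 2 * (p * ((n / p : ℕ) : ℝ)) := by exact_mod_cast h3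
      linarith
    calc (n : ℝ) / 2 * (Real.log p / p) = n / (2 * p) * Real.log p := by field_simp
      _ ≤ _ := mul_le_mul_of_nonneg_right h4 (Real.log_natCast_nonneg p)
  have hupper : ∑ p ∈ Q, ∑ m ∈ Ioc 0 n, (if p ∣ m then Real.log p else 0) ≤
      n * Real.log z := by
    rw [sum_comm]
    calc ∑ m ∈ Ioc 0 n, ∑ p ∈ Q, (if p ∣ m then Real.log p else 0)
        ≤ ∑ m ∈ Ioc 0 n, Real.log z := by
          refine sum_le_sum fun m hm => ?_
          rw [mem_Ioc] at hm
          rw [← sum_filter]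
          calc ∑ p ∈ Q with p ∣ m, Real.log p ≤ ∑ p ∈ m.primeFactors, Real.log p := by
                refine sum_le_sum_of_subset_of_nonneg (fun p hp => ?_)
                  fun p _ _ => Real.log_natCast_nonneg p
                rw [mem_filter] at hp
                exact Nat.mem_primeFactors.2 ⟨(hQ p hp.1).1, hp.2, by lia⟩
            _ ≤ Real.log m := sum_log_primeFactors_le_log (by lia)
            _ ≤ Real.log z := Real.log_le_log (by exact_mod_cast hm.1)
                ((Nat.le_floor_iff (by linarith)).1 hm.2)
      _ = n * Real.log z := by simp
  have h := (sum_le_sum hlower).trans hupper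
  rw [← mul_sum] at h
  nlinarith

/-- Upper bound half of Mertens' third theorem. -/
theorem prod_one_sub_inv_le_inv_log {z : ℝ} (hz : 1 < z) :
    ∏ p ∈ Icc 1 ⌊z⌋₊ with p.Prime, (1 - 1 / (p : ℝ)) ≤ (Real.log z)⁻¹ := by
  let f : ℕ →* ℝ :=
    { toFun := fun n => (n : ℝ)⁻¹
      map_one' := by simp
      map_mul' := fun m n => by simp [mul_comm] }
  have hf : ∀ {p : ℕ}, p.Prime → ‖f p‖ < 1 := by
    intro p hp
    have : (1 : ℝ) < p := by exact_mod_cast hp.one_lt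
    simpa [f] using inv_lt_one_of_one_lt₀ this
  obtain ⟨hs, hsum⟩ :=
    EulerProduct.summable_and_hasSum_factoredNumbers_prod_filter_prime_geometric hf (Icc 1 ⌊z⌋₊)
  have hmem : ∀ m ∈ Icc 1 ⌊z⌋₊, m ∈ Nat.factoredNumbers (Icc 1 ⌊z⌋₊) := by
    intro m hm
    rw [mem_Icc] at hm
    refine Nat.mem_factoredNumbers_of_primeFactors_subset (by lia) fun p hp => ?_
    exact mem_Icc.2 ⟨Nat.pos_of_mem_primeFactors hp, (Nat.le_of_mem_primeFactors hp).trans hm.2⟩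
  have hlog : Real.log z ≤ ∏ p ∈ Icc 1 ⌊z⌋₊ with p.Prime, (1 - f p)⁻¹ := by
    calc Real.log z ≤ (harmonic ⌊z⌋₊ : ℝ) := log_le_harmonic_floor z (by linarith)
      _ = ∑ m ∈ Icc 1 ⌊z⌋₊, f m := by simp [harmonic_eq_sum_Icc, f]
      _ = ∑ m ∈ (Icc 1 ⌊z⌋₊).attach.map
            ⟨fun m => (⟨m.1, hmem m.1 m.2⟩ : Nat.factoredNumbers (Icc 1 ⌊z⌋₊)),
              fun _ _ h => Subtype.ext (Subtype.mk.inj h)⟩, f m := by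
          rw [sum_map]
          exact (sum_attach _ _).symm
      _ ≤ _ := sum_le_hasSum _ (fun m _ => by simp [f]) hsum
  have heq : ∏ p ∈ Icc 1 ⌊z⌋₊ with p.Prime, (1 - 1 / (p : ℝ)) =
      (∏ p ∈ Icc 1 ⌊z⌋₊ with p.Prime, (1 - f p)⁻¹)⁻¹ := by
    rw [prod_inv_distrib, inv_inv]
    simp [f]
  rw [heq]
  exact inv_anti₀ (Real.log_pos hz) hlog

theorem one_sub_inv_pos_of_prime {p : ℕ} (hp : p.Prime) : 0 < 1 - 1 / (p : ℝ) := by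
  have : (1 : ℝ) < p := by exact_mod_cast hp.one_lt
  rw [sub_pos, div_lt_one (by linarith)]
  exact this

theorem exp_neg_two_div_le_one_sub_inv {p : ℕ} (hp : p.Prime) :
    Real.exp (-(2 / p)) ≤ 1 - 1 / (p : ℝ) := by
  have h2 : (2 : ℝ) ≤ p := by exact_mod_cast hp.two_le
  have h : 1 + 2 / (p : ℝ) ≤ Real.exp (2 / p) := by
    linarith [Real.add_one_le_exp (2 / (p : ℝ))]
  rw [Real.exp_neg]
  calc (Real.exp (2 / p))⁻¹ ≤ (1 + 2 / (p : ℝ))⁻¹ := inv_anti₀ (by positivity) h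
    _ ≤ 1 - 1 / (p : ℝ) := by
      rw [inv_le_iff_one_le_mul₀ (by positivity)]
      field_simp
      nlinarith

/-- The product of `1 - 1/p` over primes in `(z, X]` is bounded below in terms of
`log X / log z`. -/
theorem exp_neg_le_prod_one_sub_inv {Q : Finset ℕ} {z X : ℝ} (hz : 1 < z) (hX : 1 ≤ X)
    (hQ : ∀ p ∈ Q, p.Prime ∧ z < p ∧ (p : ℝ) ≤ X) :
    Real.exp (-(4 * (Real.log X / Real.log z))) ≤ ∏ p ∈ Q, (1 - 1 / (p : ℝ)) := by
  have hlz := Real.log_pos hz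
  have hsum : ∑ p ∈ Q, 2 / (p : ℝ) ≤ 4 * (Real.log X / Real.log z) := by
    calc ∑ p ∈ Q, 2 / (p : ℝ) ≤ ∑ p ∈ Q, 2 / Real.log z * (Real.log p / p) := by
          refine sum_le_sum fun p hp => ?_
          have hp0 : (0 : ℝ) < p := by exact_mod_cast (hQ p hp).1.pos
          have hle : Real.log z ≤ Real.log p := Real.log_le_log (by linarith) (hQ p hp).2.1.le
          rw [div_mul_div_comm, div_le_div_iff₀ hp0 (by positivity)]
          nlinarith [mul_le_mul_of_nonneg_right hle hp0.le]
      _ = 2 / Real.log z * ∑ p ∈ Q, Real.log p / p := by rw [mul_sum]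
      _ ≤ 2 / Real.log z * (2 * Real.log X) := by
          gcongr
          exact sum_log_div_le_two_mul_log hX fun p hp => ⟨(hQ p hp).1, (hQ p hp).2.2⟩
      _ = 4 * (Real.log X / Real.log z) := by ring
  calc Real.exp (-(4 * (Real.log X / Real.log z))) ≤ Real.exp (∑ p ∈ Q, -(2 / (p : ℝ))) := by
        rw [sum_neg_distrib]
        gcongr
    _ = ∏ p ∈ Q, Real.exp (-(2 / p)) := Real.exp_sum _ _
    _ ≤ _ := prod_le_prod (fun _ _ => (Real.exp_pos _).le)
        fun p hp => exp_neg_two_div_le_one_sub_inv (hQ p hp).1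

theorem prod_Icc_one_sub_inv_telescope {n : ℕ} (hn : 1 ≤ n) :
    ∏ k ∈ Icc 2 n, (1 - 1 / (k : ℝ)) = 1 / n := by
  induction n, hn using Nat.le_induction with
  | base => simp
  | succ n hn ih =>
    rw [prod_Icc_succ_top (by lia), ih]
    have : (0 : ℝ) < n := by exact_mod_cast hn
    push_cast
    field_simp
    ring

theorem one_div_le_prod_one_sub_inv {Q : Finset ℕ} {z : ℝ} (hz : 1 ≤ z)
    (hQ : ∀ p ∈ Q, p.Prime ∧ (p : ℝ) ≤ z) : 1 / z ≤ ∏ p ∈ Q, (1 - 1 / (p : ℝ)) := by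
  have hn1 : 1 ≤ ⌊z⌋₊ := Nat.one_le_floor_iff _ |>.2 hz
  calc 1 / z ≤ 1 / (⌊z⌋₊ : ℝ) :=
        one_div_le_one_div_of_le (by exact_mod_cast hn1) (Nat.floor_le (by linarith))
    _ = ∏ k ∈ Icc 2 ⌊z⌋₊, (1 - 1 / (k : ℝ)) := (prod_Icc_one_sub_inv_telescope hn1).symm
    _ ≤ ∏ p ∈ Q, (1 - 1 / (p : ℝ)) := by
        have hk : ∀ k ∈ Icc 2 ⌊z⌋₊, 1 / (k : ℝ) ≤ 1 := fun k hk => by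
          rw [div_le_one (by exact_mod_cast (by grind : 0 < k))]
          exact_mod_cast (by grind : 1 ≤ k)
        refine prod_le_prod_of_subset_of_le_one (fun p hp => ?_) (fun k hk' => ?_)
          fun k _ _ => ?_
        · exact mem_Icc.2 ⟨(hQ p hp).1.two_le, Nat.le_floor (hQ p hp).2⟩
        · linarith [hk k hk']
        · exact sub_le_self _ (by positivity)

/-- Any product of `1 - 1/p` over primes up to `X` is at least a constant times `X^(-1/4)`. -/
theorem rpow_neg_quarter_le_prod_one_sub_inv {I : Finset ℕ} {X : ℝ} (hX : 2 ≤ X)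
    (hI : ∀ p ∈ I, p.Prime ∧ (p : ℝ) ≤ X) :
    Real.exp (-16) * X ^ (-(1 / 4) : ℝ) ≤ ∏ p ∈ I, (1 - 1 / (p : ℝ)) := by
  have hX0 : 0 < X := by linarith
  set z : ℝ := X ^ (1 / 4 : ℝ) with hz
  have hz1 : 1 < z := Real.one_lt_rpow (by linarith) (by norm_num)
  have hlog : 4 * (Real.log X / Real.log z) = 16 := by
    have : Real.log X ≠ 0 := (Real.log_pos (by linarith)).ne'
    rw [hz, Real.log_rpow hX0]
    field_simp
    norm_num
  rw [← prod_filter_mul_prod_filter_not I (fun p : ℕ => z < p), Real.rpow_neg hX0.le, ← hz,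
    ← one_div, ← hlog]
  refine mul_le_mul ?_ ?_ (by positivity) ?_
  · refine exp_neg_le_prod_one_sub_inv hz1 (by linarith) fun p hp => ?_
    rw [mem_filter] at hp
    exact ⟨(hI p hp.1).1, hp.2, (hI p hp.1).2⟩
  · refine one_div_le_prod_one_sub_inv hz1.le fun p hp => ?_
    rw [mem_filter] at hp
    exact ⟨(hI p hp.1).1, not_lt.1 hp.2⟩
  · exact prod_nonneg fun p hp => (one_sub_inv_pos_of_prime (hI p (mem_filter.1 hp).1).1).le

/-- Rankin's trick: most of the product `∏ (1 + g p)` comes from sets with small product. -/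
theorem half_prod_one_add_le_sum_filter {P : Finset ℕ} {z C : ℝ} {s : ℕ} (hz : 1 < z)
    (hP : ∀ p ∈ P, p.Prime ∧ (p : ℝ) ≤ z) (g : ℕ → ℝ) (hg0 : ∀ p ∈ P, 0 ≤ g p)
    (hg : ∀ p ∈ P, g p ≤ C / p) (hC : 0 ≤ C) (hs : 4 * C + 1 ≤ s) :
    (∏ p ∈ P, (1 + g p)) / 2 ≤
      ∑ d ∈ P.powerset with ∏ p ∈ d, ((p : ℕ) : ℝ) ≤ z ^ s, ∏ p ∈ d, g p := by
  have hlz := Real.log_pos hz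
  set t : ℕ → ℝ := fun p => Real.exp (Real.log p / Real.log z) with ht
  have hlogle : ∀ p ∈ P, Real.log p / Real.log z ≤ 1 := fun p hp => by
    rw [div_le_one hlz]
    exact Real.log_le_log (by exact_mod_cast (hP p hp).1.pos) (hP p hp).2
  have hlognonneg : ∀ p : ℕ, 0 ≤ Real.log p / Real.log z := fun p =>
    div_nonneg (Real.log_natCast_nonneg p) hlz.le
  have htail : ∑ d ∈ P.powerset with ¬ ∏ p ∈ d, ((p : ℕ) : ℝ) ≤ z ^ s, ∏ p ∈ d, g p ≤
      Real.exp (-s) * ∏ p ∈ P, (1 + g p * t p) := by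
    rw [prod_one_add, mul_sum, sum_filter]
    refine sum_le_sum fun d hd => ?_
    rw [mem_powerset] at hd
    have hgd : 0 ≤ ∏ p ∈ d, g p := prod_nonneg fun p hp => hg0 p (hd hp)
    split_ifs with hle
    · rw [prod_mul_distrib]
      have : 0 ≤ ∏ p ∈ d, t p := prod_nonneg fun p _ => (Real.exp_pos _).le
      positivity
    · rw [prod_mul_distrib, mul_left_comm]
      refine le_mul_of_one_le_right hgd ?_
      rw [← Real.exp_sum, ← Real.exp_add, Real.one_le_exp_iff, ← sum_div,
        ← Real.log_prod fun p hp => by exact_mod_cast (hP p (hd hp)).1.ne_zero]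
      have := Real.log_le_log (by positivity) (not_le.1 hle).le
      rw [Real.log_pow] at this
      have := (le_div_iff₀ hlz).2 this
      linarith
  have hfac : ∏ p ∈ P, (1 + g p * t p) ≤ (∏ p ∈ P, (1 + g p)) * Real.exp (4 * C) := by
    calc ∏ p ∈ P, (1 + g p * t p)
        ≤ ∏ p ∈ P, ((1 + g p) * Real.exp (2 * C / Real.log z * (Real.log p / p))) := by
          refine prod_le_prod (fun p hp => ?_) fun p hp => ?_
          · have := mul_nonneg (hg0 p hp) (Real.exp_pos (Real.log p / Real.log z)).le
            linarith
          · have hgp := hg0 p hp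
            have hexp : t p - 1 ≤ 2 * (Real.log p / Real.log z) := by
              have := Real.abs_exp_sub_one_le (x := Real.log p / Real.log z)
                (by rw [abs_of_nonneg (hlognonneg p)]; exact hlogle p hp)
              rw [abs_of_nonneg (hlognonneg p)] at this
              exact (le_abs_self _).trans this
            have ht1 : 1 ≤ t p := Real.one_le_exp (hlognonneg p)
            have hlin : g p * (t p - 1) ≤ 2 * C / Real.log z * (Real.log p / p) := by
              calc g p * (t p - 1) ≤ C / p * (2 * (Real.log p / Real.log z)) :=
                    mul_le_mul (hg p hp) hexp (by linarith) (by positivity)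
                _ = _ := by ring
            have hone := Real.add_one_le_exp (2 * C / Real.log z * (Real.log p / p))
            calc 1 + g p * t p ≤ (1 + g p) * (1 + g p * (t p - 1)) := by
                  nlinarith [mul_nonneg (mul_nonneg hgp hgp) (sub_nonneg.2 ht1)]
              _ ≤ _ := by
                  gcongr
                  linarith
      _ = (∏ p ∈ P, (1 + g p)) *
            Real.exp (2 * C / Real.log z * ∑ p ∈ P, Real.log p / p) := by
          rw [prod_mul_distrib, ← Real.exp_sum, mul_sum]
      _ ≤ (∏ p ∈ P, (1 + g p)) * Real.exp (4 * C) := by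
          refine mul_le_mul_of_nonneg_left (Real.exp_le_exp.2 ?_)
            (prod_nonneg fun p hp => by linarith [hg0 p hp])
          calc 2 * C / Real.log z * ∑ p ∈ P, Real.log p / p
              ≤ 2 * C / Real.log z * (2 * Real.log z) := by
                gcongr
                exact sum_log_div_le_two_mul_log hz.le hP
            _ = 4 * C := by field_simp; ring
  have hprod0 : 0 ≤ ∏ p ∈ P, (1 + g p) := prod_nonneg fun p hp => by linarith [hg0 p hp]
  have hexp : Real.exp (-s) * Real.exp (4 * C) ≤ 1 / 2 := by
    rw [← Real.exp_add]
    calc Real.exp (-s + 4 * C) ≤ Real.exp (-1) := Real.exp_le_exp.2 (by linarith)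
      _ ≤ 1 / 2 := by
        rw [Real.exp_neg, one_div]
        exact inv_anti₀ (by norm_num) (by linarith [Real.add_one_le_exp 1])
  have htotal := sum_filter_add_sum_filter_not P.powerset
    (fun d => ∏ p ∈ d, (p : ℝ) ≤ z ^ s) (fun d => ∏ p ∈ d, g p)
  rw [← prod_one_add] at htotal
  have h1 : Real.exp (-s) * ∏ p ∈ P, (1 + g p * t p) ≤ (∏ p ∈ P, (1 + g p)) / 2 := by
    calc Real.exp (-s) * ∏ p ∈ P, (1 + g p * t p)
        ≤ Real.exp (-s) * ((∏ p ∈ P, (1 + g p)) * Real.exp (4 * C)) := by gcongr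
      _ = (∏ p ∈ P, (1 + g p)) * (Real.exp (-s) * Real.exp (4 * C)) := by ring
      _ ≤ (∏ p ∈ P, (1 + g p)) * (1 / 2) := by gcongr
      _ = _ := by ring
  linarith

/-- Upper bound sieve of bounded dimension `κ`: the number of `n ≤ N` avoiding the residue classes
`Ω p` modulo every `p ∈ P`. -/
theorem card_sifted_le {P : Finset ℕ} {z : ℝ} {κ s : ℕ} (hz : 1 < z)
    (hP : ∀ p ∈ P, p.Prime ∧ (p : ℝ) ≤ z) (hκ : ∀ p ∈ P, 2 * κ ≤ p) (hs : 8 * κ + 1 ≤ s)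
    (Ω : ℕ → Finset ℕ) (hΩ : ∀ p ∈ P, Ω p ⊆ range p) (hΩpos : ∀ p ∈ P, 1 ≤ #(Ω p))
    (hΩle : ∀ p ∈ P, #(Ω p) ≤ κ) (N : ℕ) :
    (#{n ∈ Icc 1 N | ∀ p ∈ P, n % p ∉ Ω p} : ℝ) ≤
      2 * N * ∏ p ∈ P, (1 - (#(Ω p) : ℝ) / p) + (z ^ s) ^ 6 := by
  have hp0 : ∀ p ∈ P, (0 : ℝ) < p := fun p hp => by exact_mod_cast (hP p hp).1.pos
  have hc1 : ∀ p ∈ P, (1 : ℝ) ≤ #(Ω p) := fun p hp => by exact_mod_cast hΩpos p hp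
  have hcκ : ∀ p ∈ P, (#(Ω p) : ℝ) ≤ κ := fun p hp => by exact_mod_cast hΩle p hp
  have hκp : ∀ p ∈ P, 2 * (κ : ℝ) ≤ p := fun p hp => by exact_mod_cast hκ p hp
  set ν : ℕ → ℝ := fun p => (#(Ω p) : ℝ) / p with hν
  have hνpos : ∀ p ∈ P, 0 < ν p := fun p hp => div_pos (by linarith [hc1 p hp]) (hp0 p hp)
  have hνhalf : ∀ p ∈ P, ν p ≤ 1 / 2 := fun p hp => by
    rw [hν, div_le_iff₀ (hp0 p hp)]
    linarith [hcκ p hp, hκp p hp]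
  set D : Finset (Finset ℕ) := {d ∈ P.powerset | ∏ p ∈ d, (p : ℝ) ≤ z ^ s} with hD
  have hDP : ∀ d ∈ D, d ⊆ P := fun d hd => mem_powerset.1 (mem_filter.1 hd).1
  have hDz : ∀ d ∈ D, ∏ p ∈ d, (p : ℝ) ≤ z ^ s := fun d hd => (mem_filter.1 hd).2
  have hone : ∀ p ∈ P, (1 : ℝ) ≤ p := fun p hp => by exact_mod_cast (hP p hp).1.one_le
  have hzs : 1 ≤ z ^ s := one_le_pow₀ hz.le
  have hD0 : ∅ ∈ D := by simp [hD, hzs]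
  have hDdown : ∀ d ∈ D, ∀ u ⊆ d, u ∈ D := by
    intro d hd u hu
    refine mem_filter.2 ⟨mem_powerset.2 (hu.trans (hDP d hd)), le_trans ?_ (hDz d hd)⟩
    exact prod_le_prod_of_subset_of_one_le hu (fun _ _ => by positivity)
      fun p hp _ => hone p (hDP d hd hp)
  have hM : ∀ d ∈ D, (∏ p ∈ d, ν p)⁻¹ ≤ z ^ s := by
    intro d hd
    refine le_trans ?_ (hDz d hd)
    rw [← prod_inv_distrib]
    refine prod_le_prod (fun p hp => (inv_pos.2 (hνpos p (hDP d hd hp))).le) fun p hp => ?_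
    rw [hν, inv_div]
    exact div_le_self (hp0 p (hDP d hd hp)).le (hc1 p (hDP d hd hp))
  have hE : ∀ d ∈ D, ∀ e ∈ D,
      |(#{n ∈ Icc 1 N | d ∪ e ⊆ {p ∈ P | n % p ∈ Ω p}} : ℝ) - N * ∏ p ∈ d ∪ e, ν p| ≤
        (z ^ s) ^ 2 := by
    intro d hd e he
    have hsub : d ∪ e ⊆ P := union_subset (hDP d hd) (hDP e he)
    have hfilter : {n ∈ Icc 1 N | d ∪ e ⊆ {p ∈ P | n % p ∈ Ω p}} =
        {n ∈ Icc 1 N | ∀ p ∈ d ∪ e, n % p ∈ Ω p} := by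
      refine filter_congr fun n _ => ?_
      exact ⟨fun h p hp => (mem_filter.1 (h hp)).2,
        fun h p hp => mem_filter.2 ⟨hsub hp, h p hp⟩⟩
    rw [hfilter]
    refine (abs_card_filter_mod_mem_sub_le _ (fun p hp => (hP p (hsub hp)).1) Ω
      (fun p hp => hΩ p (hsub hp)) N).trans ?_
    have hinter : 1 ≤ ∏ p ∈ d ∩ e, (p : ℝ) :=
      one_le_prod fun p hp => hone p (hDP d hd (mem_of_mem_inter_left hp))
    calc ∏ p ∈ d ∪ e, (p : ℝ) ≤ (∏ p ∈ d ∪ e, (p : ℝ)) * ∏ p ∈ d ∩ e, (p : ℝ) :=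
          le_mul_of_one_le_right (by positivity) hinter
      _ = (∏ p ∈ d, (p : ℝ)) * ∏ p ∈ e, (p : ℝ) := prod_union_inter
      _ ≤ z ^ s * z ^ s := mul_le_mul (hDz d hd) (hDz e he) (by positivity) (by positivity)
      _ = (z ^ s) ^ 2 := (sq _).symm
  have hcardD : (#D : ℝ) ≤ z ^ s := by
    have hle : #D ≤ #(Icc 1 ⌊z ^ s⌋₊) := by
      refine card_le_card_of_injOn (fun d => ∏ p ∈ d, p) (fun d hd => ?_) fun d hd e he hde => ?_
      · refine mem_coe.2 (mem_Icc.2 ⟨prod_pos fun p hp => (hP p (hDP d hd hp)).1.pos,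
          Nat.le_floor ?_⟩)
        push_cast
        exact hDz d hd
      · rw [← Nat.primeFactors_prod fun p hp => (hP p (hDP d hd hp)).1,
          ← Nat.primeFactors_prod fun p hp => (hP p (hDP e he hp)).1]
        exact congrArg Nat.primeFactors hde
    rw [Nat.card_Icc, Nat.add_sub_cancel] at hle
    exact (Nat.cast_le.2 hle).trans (Nat.floor_le (by positivity))
  have hsieve := selberg_sieve_subsets (Icc 1 N) (fun n => {p ∈ P | n % p ∈ Ω p}) P ν hνpos
    (fun p hp => by linarith [hνhalf p hp]) D hDP hD0 hDdown N (z ^ s) ((z ^ s) ^ 2) hM hE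
  have hrankin := half_prod_one_add_le_sum_filter (C := 2 * κ) (s := s) hz hP
    (fun p => ν p / (1 - ν p))
    (fun p hp => div_nonneg (hνpos p hp).le (by linarith [hνhalf p hp]))
    (fun p hp => by
      have h1 : ν p ≤ κ / p := div_le_div_of_nonneg_right (hcκ p hp) (hp0 p hp).le
      calc ν p / (1 - ν p) ≤ 2 * ν p := by
            rw [div_le_iff₀ (by linarith [hνhalf p hp])]
            nlinarith [hνhalf p hp, hνpos p hp]
        _ ≤ 2 * (κ / p) := by linarith
        _ = 2 * κ / p := by ring)
    (by positivity) (by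
      have : (8 * κ + 1 : ℝ) ≤ s := by exact_mod_cast hs
      linarith)
  have hprod : ∏ p ∈ P, (1 + ν p / (1 - ν p)) = (∏ p ∈ P, (1 - ν p))⁻¹ := by
    rw [← prod_inv_distrib]
    refine prod_congr rfl fun p hp => ?_
    have : 1 - ν p ≠ 0 := by linarith [hνhalf p hp]
    field_simp
    ring
  have hVpos : 0 < ∏ p ∈ P, (1 - ν p) := prod_pos fun p hp => by linarith [hνhalf p hp]
  rw [hprod] at hrankin
  have hcount : (#{n ∈ Icc 1 N | ∀ p ∈ P, n % p ∉ Ω p} : ℝ) =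
      #{n ∈ Icc 1 N | Disjoint P {p ∈ P | n % p ∈ Ω p}} := by
    congr 2
    refine filter_congr fun n _ => ?_
    rw [disjoint_left]
    exact ⟨fun h p hp hp' => h p hp (mem_filter.1 hp').2,
      fun h p hp hp' => h hp (mem_filter.2 ⟨hp, hp'⟩)⟩
  rw [hcount]
  refine hsieve.trans (add_le_add ?_ ?_)
  · calc (N : ℝ) / ∑ d ∈ D, ∏ p ∈ d, ν p / (1 - ν p)
        ≤ N / ((∏ p ∈ P, (1 - ν p))⁻¹ / 2) := by gcongr
      _ = 2 * N * ∏ p ∈ P, (1 - ν p) := by field_simp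
  · calc (#D : ℝ) ^ 2 * ((z ^ s) ^ 2 * (z ^ s) ^ 2)
        ≤ (z ^ s) ^ 2 * ((z ^ s) ^ 2 * (z ^ s) ^ 2) := by gcongr
      _ = (z ^ s) ^ 6 := by ring

/-- There are few shifted prime powers whose underlying prime is small. -/
theorem card_isPrimePow_minFac_le (c : ℤ) {N : ℕ} {z Y : ℝ} (hz : 0 ≤ z) (hY : 1 ≤ Y)
    (hN : ∀ n ∈ Icc 1 N, ((((n : ℤ) + c).toNat : ℕ) : ℝ) ≤ Y) :
    (#{n ∈ Icc 1 N | IsPrimePow (((n : ℕ) : ℤ) + c).toNat ∧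
      (((((n : ℕ) : ℤ) + c).toNat.minFac : ℕ) : ℝ) ≤ z} : ℝ) ≤ z * (2 * (1 + Real.log Y)) := by
  set T := {n ∈ Icc 1 N | IsPrimePow (((n : ℕ) : ℤ) + c).toNat ∧
      (((((n : ℕ) : ℤ) + c).toNat.minFac : ℕ) : ℝ) ≤ z} with hT
  have hcard : #T ≤ #((Icc 1 ⌊z⌋₊ ×ˢ range (Nat.log 2 ⌊Y⌋₊ + 1)).image fun x => x.1 ^ x.2) := by
    refine card_le_card_of_injOn (fun n => ((n : ℤ) + c).toNat) (fun n hn => ?_)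
      fun n hn m hm hnm => ?_
    · obtain ⟨hnN, hpp, hle⟩ := mem_filter.1 (mem_coe.1 hn)
      obtain ⟨k, hpow⟩ : ∃ k, ((n : ℤ) + c).toNat.minFac ^ k = ((n : ℤ) + c).toNat :=
        ⟨_, hpp.minFac_pow_factorization_eq⟩
      have hmin : ((n : ℤ) + c).toNat.minFac.Prime := Nat.minFac_prime hpp.ne_one
      refine mem_coe.2 (mem_image.2 ⟨(((n : ℤ) + c).toNat.minFac, k), ?_, hpow⟩)
      refine mem_product.2 ⟨mem_Icc.2 ⟨hmin.pos, Nat.le_floor hle⟩, mem_range.2 ?_⟩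
      refine Nat.lt_succ_of_le (Nat.le_log_of_pow_le one_lt_two ?_)
      calc 2 ^ k ≤ ((n : ℤ) + c).toNat.minFac ^ k := Nat.pow_le_pow_left hmin.two_le k
        _ = ((n : ℤ) + c).toNat := hpow
        _ ≤ ⌊Y⌋₊ := Nat.le_floor (hN n hnN)
    · have h1 := (mem_filter.1 (mem_coe.1 hn)).2.1.pos
      have h2 := (mem_filter.1 (mem_coe.1 hm)).2.1.pos
      simp only at hnm
      lia
  have hlog : (Nat.log 2 ⌊Y⌋₊ : ℝ) ≤ 2 * Real.log Y := by
    have hpow : ((2 : ℝ) ^ Nat.log 2 ⌊Y⌋₊) ≤ Y := by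
      have h : 2 ^ Nat.log 2 ⌊Y⌋₊ ≤ ⌊Y⌋₊ :=
        Nat.pow_log_le_self 2 (Nat.floor_pos.2 hY).ne'
      exact (by exact_mod_cast h : ((2 : ℝ) ^ Nat.log 2 ⌊Y⌋₊) ≤ ⌊Y⌋₊).trans
        (Nat.floor_le (by linarith))
    have := Real.log_le_log (by positivity) hpow
    rw [Real.log_pow] at this
    have h2 := Real.log_two_gt_d9
    nlinarith [Nat.cast_nonneg (α := ℝ) (Nat.log 2 ⌊Y⌋₊)]
  have hcard' : #T ≤ ⌊z⌋₊ * (Nat.log 2 ⌊Y⌋₊ + 1) := by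
    refine (hcard.trans card_image_le).trans_eq ?_
    rw [card_product, Nat.card_Icc, card_range, Nat.add_sub_cancel]
  calc (#T : ℝ) ≤ ⌊z⌋₊ * (Nat.log 2 ⌊Y⌋₊ + 1) := by exact_mod_cast hcard'
    _ ≤ z * (2 * (1 + Real.log Y)) := by
        refine mul_le_mul (Nat.floor_le hz) (by linarith) (by positivity) hz

theorem one_le_totientRatio {m : ℤ} (hm : m ≠ 0) : 1 ≤ totientRatio m := by
  have hpos : 0 < m.natAbs.totient := Nat.totient_pos.2 (Int.natAbs_pos.2 hm)
  rw [totientRatio, one_le_div (by exact_mod_cast hpos)]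
  exact_mod_cast Nat.totient_le _

theorem prod_primeFactors_one_sub_inv_eq {m : ℤ} (hm : m ≠ 0) :
    ∏ p ∈ m.natAbs.primeFactors, (1 - 1 / (p : ℝ)) = (totientRatio m)⁻¹ := by
  have h : ((m.natAbs.totient : ℚ) : ℝ) =
      ((m.natAbs * ∏ p ∈ m.natAbs.primeFactors, (1 - (p : ℚ)⁻¹) : ℚ) : ℝ) :=
    congrArg _ (Nat.totient_eq_mul_prod_factors m.natAbs)
  push_cast at h
  have hm0 : (m.natAbs : ℝ) ≠ 0 := by exact_mod_cast Int.natAbs_ne_zero.2 hm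
  simp only [totientRatio, one_div, inv_div]
  rw [eq_div_iff hm0, h, mul_comm]

/-- A product of `1 - 1/p` over primes dividing some `m j` is at least the product of the
`φ(|m j|)/|m j|`. -/
theorem inv_prod_totientRatio_le {ι : Type*} [Fintype ι] (m : ι → ℤ) (hm : ∀ j, m j ≠ 0)
    {T : Finset ℕ} (hT : ∀ p ∈ T, p.Prime ∧ ∃ j, (p : ℤ) ∣ m j) :
    (∏ j, totientRatio (m j))⁻¹ ≤ ∏ p ∈ T, (1 - 1 / (p : ℝ)) := by
  have hle1 : ∀ p : ℕ, 1 - 1 / (p : ℝ) ≤ 1 := fun p => sub_le_self _ (by positivity)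
  have h0 : ∀ p : ℕ, p.Prime → 0 ≤ 1 - 1 / (p : ℝ) := fun p hp =>
    (one_sub_inv_pos_of_prime hp).le
  calc (∏ j, totientRatio (m j))⁻¹
      = ∏ j, ∏ p ∈ (m j).natAbs.primeFactors, (1 - 1 / (p : ℝ)) := by
        rw [← prod_inv_distrib]
        exact prod_congr rfl fun j _ => (prod_primeFactors_one_sub_inv_eq (hm j)).symm
    _ ≤ ∏ j, ∏ p ∈ T with ((p : ℕ) : ℤ) ∣ m j, (1 - 1 / (p : ℝ)) := by
        refine prod_le_prod (fun j _ => prod_nonneg fun p hp =>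
          h0 p (Nat.prime_of_mem_primeFactors hp)) fun j _ => ?_
        refine prod_le_prod_of_subset_of_le_one (fun p hp => ?_)
          (fun p hp => h0 p (Nat.prime_of_mem_primeFactors hp)) fun p _ _ => hle1 p
        rw [mem_filter] at hp
        exact Nat.mem_primeFactors.2 ⟨(hT p hp.1).1, Int.natCast_dvd.1 hp.2,
          Int.natAbs_ne_zero.2 (hm j)⟩
    _ = ∏ p ∈ T, ∏ j, if (p : ℤ) ∣ m j then (1 - 1 / (p : ℝ)) else 1 := by
        rw [prod_comm]
        exact prod_congr rfl fun j _ => prod_filter _ _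
    _ ≤ ∏ p ∈ T, (1 - 1 / (p : ℝ)) := by
        have hif : ∀ p ∈ T, ∀ j, 0 ≤ (if (p : ℤ) ∣ m j then (1 - 1 / (p : ℝ)) else 1) :=
          fun p hp j => by
            split_ifs
            exacts [h0 p (hT p hp).1, zero_le_one]
        refine prod_le_prod (fun p hp => prod_nonneg fun j _ => hif p hp j) fun p hp => ?_
        obtain ⟨j, hj⟩ := (hT p hp).2
        calc _ ≤ ∏ j ∈ {j}, if (p : ℤ) ∣ m j then (1 - 1 / (p : ℝ)) else 1 := by
              refine prod_le_prod_of_subset_of_le_one (subset_univ _)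
                (fun j _ => hif p hp j) fun j _ _ => ?_
              split_ifs
              exacts [hle1 p, le_rfl]
          _ = 1 - 1 / (p : ℝ) := by simp [hj]

/-- Restricting the product of `1 - 1/p` over `I` to the primes in `(B, z]` that divide no `m j`
costs a bounded factor times the totient ratios of the `m j`. -/
theorem prod_filter_one_sub_inv_le {ι : Type*} [Fintype ι] (m : ι → ℤ) (hm : ∀ j, m j ≠ 0)
    {I : Finset ℕ} {B z X : ℝ} (hB : 1 ≤ B) (hz : 1 < z) (hX : 1 ≤ X)
    (hI : ∀ p ∈ I, p.Prime ∧ (p : ℝ) ≤ X) :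
    ∏ p ∈ I with (B < ((p : ℕ) : ℝ) ∧ (p : ℝ) ≤ z) ∧ ∀ j, ¬ (p : ℤ) ∣ m j, (1 - 1 / (p : ℝ)) ≤
      B * Real.exp (4 * (Real.log X / Real.log z)) * (∏ j, totientRatio (m j)) *
        ∏ p ∈ I, (1 - 1 / (p : ℝ)) := by
  have hnonneg : ∀ J ⊆ I, 0 ≤ ∏ p ∈ J, (1 - 1 / (p : ℝ)) := fun J hJ =>
    prod_nonneg fun p hp => (one_sub_inv_pos_of_prime (hI p (hJ hp)).1).le
  set G := ∏ p ∈ I with (B < ((p : ℕ) : ℝ) ∧ (p : ℝ) ≤ z) ∧ ∀ j, ¬ (p : ℤ) ∣ m j,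
    (1 - 1 / (p : ℝ)) with hG
  set R := ∏ j, totientRatio (m j) with hR
  have hR1 : 0 < R := prod_pos fun j _ => by linarith [one_le_totientRatio (hm j)]
  have hG0 : 0 ≤ G := hnonneg _ (filter_subset _ _)
  have hsplit : ∏ p ∈ I, (1 - 1 / (p : ℝ)) =
      (∏ p ∈ I with ¬ B < ((p : ℕ) : ℝ), (1 - 1 / (p : ℝ))) *
      ((∏ p ∈ I with B < ((p : ℕ) : ℝ) ∧ ¬ ((p : ℕ) : ℝ) ≤ z, (1 - 1 / (p : ℝ))) *
      (∏ p ∈ I with (B < ((p : ℕ) : ℝ) ∧ (p : ℝ) ≤ z) ∧ ¬ ∀ j, ¬ (p : ℤ) ∣ m j,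
        (1 - 1 / (p : ℝ)))) *
      G := by
    rw [← prod_filter_mul_prod_filter_not I (fun p : ℕ => B < (p : ℝ)),
      ← prod_filter_mul_prod_filter_not (I.filter fun p : ℕ => B < (p : ℝ))
        (fun p : ℕ => (p : ℝ) ≤ z), filter_filter, filter_filter,
      ← prod_filter_mul_prod_filter_not (I.filter fun p : ℕ => B < (p : ℝ) ∧ (p : ℝ) ≤ z)
        (fun p : ℕ => ∀ j, ¬ (p : ℤ) ∣ m j), filter_filter, filter_filter, hG]
    ring
  have h1 : 1 / B ≤ ∏ p ∈ I with ¬ B < ((p : ℕ) : ℝ), (1 - 1 / (p : ℝ)) := by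
    refine one_div_le_prod_one_sub_inv hB fun p hp => ?_
    rw [mem_filter] at hp
    exact ⟨(hI p hp.1).1, not_lt.1 hp.2⟩
  have h2 : Real.exp (-(4 * (Real.log X / Real.log z))) ≤
      ∏ p ∈ I with B < ((p : ℕ) : ℝ) ∧ ¬ ((p : ℕ) : ℝ) ≤ z, (1 - 1 / (p : ℝ)) := by
    refine exp_neg_le_prod_one_sub_inv hz hX fun p hp => ?_
    rw [mem_filter] at hp
    exact ⟨(hI p hp.1).1, not_le.1 hp.2.2, (hI p hp.1).2⟩
  have h3 : R⁻¹ ≤ ∏ p ∈ I with (B < ((p : ℕ) : ℝ) ∧ (p : ℝ) ≤ z) ∧ ¬ ∀ j, ¬ (p : ℤ) ∣ m j,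
      (1 - 1 / (p : ℝ)) := by
    refine inv_prod_totientRatio_le m hm fun p hp => ?_
    rw [mem_filter] at hp
    exact ⟨(hI p hp.1).1, by simpa using hp.2.2⟩
  rw [hsplit]
  calc G = B * Real.exp (4 * (Real.log X / Real.log z)) * R *
        (1 / B * (Real.exp (-(4 * (Real.log X / Real.log z))) * R⁻¹) * G) := by
        rw [Real.exp_neg]
        field_simp
    _ ≤ _ := by
        gcongr
        · exact hnonneg _ (filter_subset _ _)
        · exact hnonneg _ (filter_subset _ _)

/-- The product of `1 - 1/p` over primes in `(B, z]` is at most `B / log z`. -/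
theorem prod_filter_prime_one_sub_inv_le {B z : ℝ} (hB : 1 ≤ B) (hz : 1 < z) :
    ∏ p ∈ Icc 1 ⌊z⌋₊ with p.Prime ∧ B < ((p : ℕ) : ℝ), (1 - 1 / (p : ℝ)) ≤ B / Real.log z := by
  have h := prod_one_sub_inv_le_inv_log hz
  rw [← prod_filter_mul_prod_filter_not _ (fun p : ℕ => B < (p : ℝ)), filter_filter] at h
  have hlow : 1 / B ≤
      ∏ p ∈ {p ∈ Icc 1 ⌊z⌋₊ | p.Prime} with ¬ B < ((p : ℕ) : ℝ), (1 - 1 / (p : ℝ)) := by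
    refine one_div_le_prod_one_sub_inv hB fun p hp => ?_
    simp only [mem_filter] at hp
    exact ⟨hp.1.2, not_lt.1 hp.2⟩
  have hpos : 0 ≤ ∏ p ∈ Icc 1 ⌊z⌋₊ with p.Prime ∧ B < ((p : ℕ) : ℝ), (1 - 1 / (p : ℝ)) :=
    prod_nonneg fun p hp => (one_sub_inv_pos_of_prime (mem_filter.1 hp).2.1).le
  have h2 := (mul_le_mul_of_nonneg_left hlow hpos).trans h
  rw [mul_one_div, div_le_iff₀ (by linarith)] at h2
  rw [div_eq_inv_mul]
  exact h2

theorem natCast_mod_eq_toNat_emod_neg_iff {p : ℕ} (hp : 0 < p) (n : ℕ) (c : ℤ) :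
    n % p = ((-c) % (p : ℤ)).toNat ↔ (p : ℤ) ∣ n + c := by
  have h0 := Int.emod_nonneg (-c) (by lia : (p : ℤ) ≠ 0)
  rw [← Int.natCast_inj, Int.toNat_of_nonneg h0, Int.natCast_mod, ← sub_neg_eq_add,
    Int.emod_eq_emod_iff_emod_sub_eq_zero, Int.dvd_iff_emod_eq_zero]

/-- The residue classes modulo `p` of the solutions of `n + a j ≡ 0` for some `j`, together with
those of `n + h ≡ 0` when `p ∈ I`. -/
def siftedResidues {ℓ : ℕ} (a : Fin ℓ → ℤ) (h : ℤ) (I : Finset ℕ) (p : ℕ) : Finset ℕ :=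
  univ.image (fun j => ((-a j) % (p : ℤ)).toNat) ∪
    if p ∈ I then {((-h) % (p : ℤ)).toNat} else ∅

section siftedResidues

variable {ℓ : ℕ} (a : Fin ℓ → ℤ) (h : ℤ) (I : Finset ℕ) {p : ℕ}

theorem mod_mem_siftedResidues_iff (hp : 0 < p) (n : ℕ) :
    n % p ∈ siftedResidues a h I p ↔
      (∃ j, (p : ℤ) ∣ n + a j) ∨ p ∈ I ∧ (p : ℤ) ∣ n + h := by
  simp only [siftedResidues, mem_union, mem_image, mem_univ, true_and,
    ← natCast_mod_eq_toNat_emod_neg_iff hp]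
  refine or_congr (exists_congr fun j => eq_comm) ?_
  split_ifs with hpI <;> simp [hpI]

theorem siftedResidues_subset_range (hp : 0 < p) : siftedResidues a h I p ⊆ range p := by
  have hlt : ∀ c : ℤ, (c % (p : ℤ)).toNat < p := fun c => by
    have := Int.emod_lt_of_pos c (by lia : (0 : ℤ) < p)
    lia
  intro r hr
  rw [mem_range]
  rw [siftedResidues, mem_union, mem_image] at hr
  obtain ⟨j, -, rfl⟩ | hr := hr
  · exact hlt _
  · split_ifs at hr
    · rw [mem_singleton] at hr
      exact hr ▸ hlt _
    · simp at hr

theorem card_siftedResidues_le : #(siftedResidues a h I p) ≤ ℓ + 1 := by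
  refine (card_union_le _ _).trans (add_le_add (card_image_le.trans_eq (by simp)) ?_)
  split_ifs <;> simp

theorem toNat_emod_neg_eq_iff (hp : 0 < p) (b c : ℤ) :
    ((-b) % (p : ℤ)).toNat = ((-c) % (p : ℤ)).toNat ↔ (p : ℤ) ∣ c - b := by
  have h1 := Int.emod_nonneg (-b) (by lia : (p : ℤ) ≠ 0)
  have h2 := Int.emod_nonneg (-c) (by lia : (p : ℤ) ≠ 0)
  rw [← Int.natCast_inj, Int.toNat_of_nonneg h1, Int.toNat_of_nonneg h2,
    Int.emod_eq_emod_iff_emod_sub_eq_zero, Int.dvd_iff_emod_eq_zero]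
  congr! 2
  ring

theorem le_card_siftedResidues (hp : 0 < p)
    (ha : ∀ i j, (p : ℤ) ∣ a i - a j → i = j) :
    ℓ + (if p ∈ I ∧ ∀ j, ¬ (p : ℤ) ∣ h - a j then 1 else 0) ≤ #(siftedResidues a h I p) := by
  have hcard : #(univ.image fun j => ((-a j) % (p : ℤ)).toNat) = ℓ := by
    rw [card_image_of_injective, card_univ, Fintype.card_fin]
    intro i j hij
    exact (ha j i ((toNat_emod_neg_eq_iff hp _ _).1 hij)).symm
  split_ifs with hI
  · rw [siftedResidues, if_pos hI.1, card_union_of_disjoint, hcard, card_singleton]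
    rw [disjoint_singleton_right, mem_image]
    rintro ⟨j, -, hj⟩
    exact hI.2 j ((toNat_emod_neg_eq_iff hp _ _).1 hj)
  · rw [add_zero]
    exact hcard.symm.le.trans (card_le_card subset_union_left)

theorem one_sub_card_siftedResidues_div_le (hp : p.Prime)
    (ha : ∀ i j, (p : ℤ) ∣ a i - a j → i = j) :
    1 - (#(siftedResidues a h I p) : ℝ) / p ≤
      (1 - 1 / (p : ℝ)) ^ ℓ *
        if p ∈ I ∧ ∀ j, ¬ (p : ℤ) ∣ h - a j then 1 - 1 / (p : ℝ) else 1 := by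
  have hp1 : (1 : ℝ) ≤ p := by exact_mod_cast hp.one_le
  have hle := le_card_siftedResidues a h I hp.pos ha
  have hbern := one_add_mul_le_pow (a := -(1 / (p : ℝ)))
    (by have : 1 / (p : ℝ) ≤ 1 := (div_le_one (by linarith)).2 hp1
        linarith) (ℓ + if p ∈ I ∧ ∀ j, ¬ (p : ℤ) ∣ h - a j then 1 else 0)
  calc 1 - (#(siftedResidues a h I p) : ℝ) / p
      ≤ 1 - ((ℓ + if p ∈ I ∧ ∀ j, ¬ (p : ℤ) ∣ h - a j then 1 else 0 : ℕ) : ℝ) / p := by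
        gcongr
    _ ≤ (1 - 1 / (p : ℝ)) ^ (ℓ + if p ∈ I ∧ ∀ j, ¬ (p : ℤ) ∣ h - a j then 1 else 0) := by
        rw [sub_eq_add_neg 1 (1 / (p : ℝ))]
        refine le_trans (le_of_eq ?_) hbern
        ring
    _ = _ := by
        rw [pow_add]
        split_ifs <;> simp

/-- The number of `n ≤ N` such that no prime in `(B, z]` divides any `n + a j`, and no prime in
`I ∩ (B, z]` divides `n + h`. -/
theorem card_sifted_shifts_le (hm : ∀ j, h - a j ≠ 0) (hℓ : 1 ≤ ℓ) {B : ℕ} {z X : ℝ} {s : ℕ}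
    (hz : 1 < z) (hX : 1 ≤ X) (hI : ∀ p ∈ I, p.Prime ∧ (p : ℝ) ≤ X)
    (hB : 2 * (ℓ + 1) ≤ B) (ha : ∀ p : ℕ, B < p → ∀ i j, (p : ℤ) ∣ a i - a j → i = j)
    (hs : 8 * (ℓ + 1) + 1 ≤ s) (N : ℕ) :
    (#{n ∈ Icc 1 N | ∀ p ∈ {p ∈ Icc 1 ⌊z⌋₊ | p.Prime ∧ (B : ℝ) < ((p : ℕ) : ℝ)},
      ¬ ((∃ j, (p : ℤ) ∣ (n : ℕ) + a j) ∨ p ∈ I ∧ (p : ℤ) ∣ (n : ℕ) + h)} : ℝ) ≤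
      2 * N * ((B / Real.log z) ^ ℓ * (B * Real.exp (4 * (Real.log X / Real.log z)) *
        (∏ j, totientRatio (h - a j)) * ∏ p ∈ I, (1 - 1 / (p : ℝ)))) + (z ^ s) ^ 6 := by
  set P : Finset ℕ := {p ∈ Icc 1 ⌊z⌋₊ | p.Prime ∧ (B : ℝ) < ((p : ℕ) : ℝ)} with hP
  have hPz : ∀ p ∈ P, p.Prime ∧ (p : ℝ) ≤ z := fun p hp => by
    rw [hP, mem_filter, mem_Icc] at hp
    exact ⟨hp.2.1, (Nat.le_floor_iff (by linarith)).1 hp.1.2⟩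
  have hPB : ∀ p ∈ P, B < p := fun p hp => by exact_mod_cast (mem_filter.1 hp).2.2
  have hcast : (1 : ℝ) ≤ B := by exact_mod_cast (by lia : 1 ≤ B)
  have hsieve := card_sifted_le (κ := ℓ + 1) (s := s) hz hPz
    (fun p hp => by have := hPB p hp; lia) hs (siftedResidues a h I)
    (fun p hp => siftedResidues_subset_range a h I (hPz p hp).1.pos)
    (fun p hp => hℓ.trans ((Nat.le_add_right _ _).trans
      (le_card_siftedResidues a h I (hPz p hp).1.pos (ha p (hPB p hp)))))
    (fun p _ => card_siftedResidues_le a h I) N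
  have hfilter : {n ∈ Icc 1 N | ∀ p ∈ P,
      ¬ ((∃ j, (p : ℤ) ∣ (n : ℕ) + a j) ∨ p ∈ I ∧ (p : ℤ) ∣ (n : ℕ) + h)} =
      {n ∈ Icc 1 N | ∀ p ∈ P, n % p ∉ siftedResidues a h I p} := by
    refine filter_congr fun n _ => forall₂_congr fun p hp => ?_
    rw [mod_mem_siftedResidues_iff a h I (hPz p hp).1.pos]
  rw [hfilter]
  refine hsieve.trans ?_
  gcongr
  have hpos : ∀ p ∈ P, 0 ≤ 1 - 1 / (p : ℝ) := fun p hp =>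
    (one_sub_inv_pos_of_prime (hPz p hp).1).le
  calc ∏ p ∈ P, (1 - (#(siftedResidues a h I p) : ℝ) / p)
      ≤ ∏ p ∈ P, ((1 - 1 / (p : ℝ)) ^ ℓ *
        if p ∈ I ∧ ∀ j, ¬ (p : ℤ) ∣ h - a j then 1 - 1 / (p : ℝ) else 1) := by
        refine prod_le_prod (fun p hp => ?_) fun p hp =>
          one_sub_card_siftedResidues_div_le a h I (hPz p hp).1 (ha p (hPB p hp))
        have h0 : (0 : ℝ) < p := by exact_mod_cast (hPz p hp).1.pos
        rw [sub_nonneg, div_le_one h0]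
        have := card_siftedResidues_le a h I (p := p)
        have := hPB p hp
        exact_mod_cast (by lia : #(siftedResidues a h I p) ≤ p)
    _ = (∏ p ∈ P, (1 - 1 / (p : ℝ))) ^ ℓ *
        ∏ p ∈ P with p ∈ I ∧ ∀ j, ¬ ((p : ℕ) : ℤ) ∣ h - a j, (1 - 1 / (p : ℝ)) := by
        rw [prod_mul_distrib, prod_pow]
        exact congrArg _ (prod_filter _ _).symm
    _ ≤ _ := by
        refine mul_le_mul (pow_le_pow_left₀ (prod_nonneg hpos)
          (prod_filter_prime_one_sub_inv_le hcast hz) ℓ) ?_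
          (prod_nonneg fun p hp => hpos p (mem_filter.1 hp).1)
          (pow_nonneg (div_nonneg (by positivity) (Real.log_pos hz).le) _)
        refine le_trans (le_of_eq (prod_congr ?_ fun _ _ => rfl))
          (prod_filter_one_sub_inv_le (fun j => h - a j) hm hcast hz hX hI)
        ext p
        simp only [hP, mem_filter, mem_Icc]
        constructor
        · rintro ⟨⟨⟨h1, h2⟩, h3, h4⟩, h5, h6⟩
          exact ⟨h5, ⟨h4, (Nat.le_floor_iff (by linarith)).1 h2⟩, h6⟩
        · rintro ⟨h1, ⟨h2, h3⟩, h4⟩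
          exact ⟨⟨⟨(hI p h1).1.one_le, Nat.le_floor h3⟩, (hI p h1).1, h2⟩, h1, h4⟩

end siftedResidues

/-- Removing the weights: the correlation is bounded by powers of a logarithm times the number of
sifted integers, up to the contribution of prime powers with a small prime. -/
theorem sum_correlation_le {ℓ : ℕ} (a : Fin ℓ → ℤ) (h : ℤ) (I : Finset ℕ) {N B : ℕ} {z Y : ℝ}
    (hz : 0 ≤ z) (hY : 1 ≤ Y)
    (hN : ∀ j, ∀ n ∈ Icc 1 N, ((((n : ℤ) + a j).toNat : ℕ) : ℝ) ≤ Y) :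
    ∑ n ∈ Icc 1 N, (if ∀ p ∈ I, ¬ (p : ℤ) ∣ ((n : ℤ) + h) then (1 : ℝ) else 0) *
        ∏ j, Λ (((n : ℤ) + a j).toNat) ≤
      (1 + Real.log Y) ^ ℓ *
        (#{n ∈ Icc 1 N | ∀ p ∈ {p ∈ Icc 1 ⌊z⌋₊ | p.Prime ∧ (B : ℝ) < ((p : ℕ) : ℝ)},
          ¬ ((∃ j, (p : ℤ) ∣ (n : ℕ) + a j) ∨ p ∈ I ∧ (p : ℤ) ∣ (n : ℕ) + h)} +
          ℓ * (z * (2 * (1 + Real.log Y)))) := by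
  set S : Finset ℕ := {n ∈ Icc 1 N | ∀ p ∈ {p ∈ Icc 1 ⌊z⌋₊ | p.Prime ∧ (B : ℝ) < ((p : ℕ) : ℝ)},
    ¬ ((∃ j, (p : ℤ) ∣ (n : ℕ) + a j) ∨ p ∈ I ∧ (p : ℤ) ∣ (n : ℕ) + h)} with hS
  set bad : Fin ℓ → Finset ℕ := fun j => {n ∈ Icc 1 N | IsPrimePow (((n : ℕ) : ℤ) + a j).toNat ∧
    (((((n : ℕ) : ℤ) + a j).toNat.minFac : ℕ) : ℝ) ≤ z} with hbad
  set f : ℕ → ℝ := fun n => (if ∀ p ∈ I, ¬ (p : ℤ) ∣ ((n : ℤ) + h) then (1 : ℝ) else 0) *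
    ∏ j, Λ (((n : ℤ) + a j).toNat) with hf
  have hlogY : 0 ≤ Real.log Y := Real.log_nonneg hY
  have hΛ : ∀ j, ∀ n ∈ Icc 1 N, Λ (((n : ℤ) + a j).toNat) ≤ 1 + Real.log Y := by
    intro j n hn
    obtain h0 | h0 := Nat.eq_zero_or_pos ((n : ℤ) + a j).toNat
    · rw [h0, ArithmeticFunction.map_zero]
      linarith
    · have := Real.log_le_log (by exact_mod_cast h0) (hN j n hn)
      exact vonMangoldt_le_log.trans (by linarith)
  have hfle : ∀ n ∈ Icc 1 N, f n ≤ (1 + Real.log Y) ^ ℓ := by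
    intro n hn
    have hprod : ∏ j, Λ (((n : ℤ) + a j).toNat) ≤ (1 + Real.log Y) ^ ℓ := by
      refine (prod_le_prod (fun j _ => vonMangoldt_nonneg) fun j _ => hΛ j n hn).trans_eq ?_
      simp
    have hnonneg : 0 ≤ ∏ j, Λ (((n : ℤ) + a j).toNat) := prod_nonneg fun j _ => vonMangoldt_nonneg
    simp only [hf]
    split_ifs <;> linarith
  have hsupp : ∀ n ∈ Icc 1 N, n ∉ S ∪ univ.biUnion bad → f n = 0 := by
    intro n hn hnot
    by_contra hne
    obtain ⟨hif, hprod⟩ := mul_ne_zero_iff.1 hne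
    have hnI : ∀ p ∈ I, ¬ (p : ℤ) ∣ ((n : ℤ) + h) := by
      by_contra hcon
      exact hif (if_neg hcon)
    have hpp : ∀ j, IsPrimePow ((n : ℤ) + a j).toNat := fun j =>
      vonMangoldt_ne_zero_iff.1 (prod_ne_zero_iff.1 hprod j (mem_univ j))
    rw [mem_union, mem_biUnion] at hnot
    refine hnot (Or.inl (mem_filter.2 ⟨hn, fun p hp => ?_⟩))
    rw [mem_filter, mem_Icc] at hp
    rintro (⟨j, hj⟩ | ⟨hpI, hpn⟩)
    · refine hnot (Or.inr ⟨j, mem_univ j, mem_filter.2 ⟨hn, hpp j, ?_⟩⟩)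
      have hpos : 0 < ((n : ℤ) + a j).toNat := (hpp j).pos
      have hdvd : p ∣ ((n : ℤ) + a j).toNat := by
        rw [← Int.natCast_dvd_natCast, Int.toNat_of_nonneg (by lia)]
        exact hj
      have hle : ((n : ℤ) + a j).toNat.minFac ≤ ⌊z⌋₊ :=
        (Nat.minFac_le_of_dvd hp.2.1.two_le hdvd).trans hp.1.2
      exact (Nat.le_floor_iff hz).1 hle
    · exact hnI p hpI hpn
  have hsubset : S ∪ univ.biUnion bad ⊆ Icc 1 N :=
    union_subset (filter_subset _ _) (biUnion_subset.2 fun j _ => filter_subset _ _)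
  have hcard : (#(S ∪ univ.biUnion bad) : ℝ) ≤ #S + ℓ * (z * (2 * (1 + Real.log Y))) := by
    calc (#(S ∪ univ.biUnion bad) : ℝ) ≤ #S + ∑ j, (#(bad j) : ℝ) := by
          exact_mod_cast (card_union_le _ _).trans (Nat.add_le_add_left card_biUnion_le _)
      _ ≤ #S + ∑ _j : Fin ℓ, z * (2 * (1 + Real.log Y)) := by
          gcongr with j
          exact card_isPrimePow_minFac_le (a j) hz hY (hN j)
      _ = _ := by simp
  calc ∑ n ∈ Icc 1 N, f n = ∑ n ∈ S ∪ univ.biUnion bad, f n :=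
        (sum_subset hsubset hsupp).symm
    _ ≤ #(S ∪ univ.biUnion bad) • (1 + Real.log Y) ^ ℓ :=
        sum_le_card_nsmul _ _ _ fun n hn => hfle n (hsubset hn)
    _ = (1 + Real.log Y) ^ ℓ * #(S ∪ univ.biUnion bad) := by rw [nsmul_eq_mul, mul_comm]
    _ ≤ _ := by gcongr

/-- Powers of `log X` times `√X` are dominated by `X` times any product of `1 - 1/p` over primes
up to `X`. -/
theorem pow_log_mul_sqrt_le {I : Finset ℕ} {X : ℝ} (hX : 2 ≤ X)
    (hI : ∀ p ∈ I, p.Prime ∧ (p : ℝ) ≤ X) {k : ℕ} (hk : 1 ≤ k) :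
    Real.log X ^ k * X ^ (1 / 2 : ℝ) ≤
      (4 * k) ^ k * Real.exp 16 * (X * ∏ p ∈ I, (1 - 1 / (p : ℝ))) := by
  have hX0 : 0 < X := by linarith
  have hk0 : (0 : ℝ) < k := by exact_mod_cast hk
  have hlog : Real.log X ≤ 4 * k * X ^ (1 / (4 * k) : ℝ) := by
    refine (Real.log_le_rpow_div hX0.le (by positivity : (0 : ℝ) < 1 / (4 * k))).trans_eq ?_
    field_simp
  have hpow : Real.log X ^ k ≤ (4 * k) ^ k * X ^ (1 / 4 : ℝ) := by
    calc Real.log X ^ k ≤ (4 * k * X ^ (1 / (4 * k) : ℝ)) ^ k :=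
          pow_le_pow_left₀ (Real.log_nonneg (by linarith)) hlog k
      _ = (4 * k) ^ k * X ^ (1 / 4 : ℝ) := by
          rw [mul_pow, ← Real.rpow_natCast (X ^ _), ← Real.rpow_mul hX0.le]
          congr 2
          field_simp
  have hW := rpow_neg_quarter_le_prod_one_sub_inv hX hI
  calc Real.log X ^ k * X ^ (1 / 2 : ℝ)
      ≤ (4 * k) ^ k * X ^ (1 / 4 : ℝ) * X ^ (1 / 2 : ℝ) := by gcongr
    _ = (4 * k) ^ k * Real.exp 16 * (X * (Real.exp (-16) * X ^ (-(1 / 4) : ℝ))) := by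
        have h1 : X ^ (1 / 4 : ℝ) * X ^ (1 / 2 : ℝ) = X * X ^ (-(1 / 4) : ℝ) := by
          rw [← Real.rpow_add hX0, ← Real.rpow_one_add' hX0.le (by norm_num)]
          norm_num
        have h2 : Real.exp 16 * Real.exp (-16) = 1 := by rw [← Real.exp_add]; simp
        rw [mul_assoc, h1]
        linear_combination (-(4 * k : ℝ) ^ k * (X * X ^ (-(1 / 4) : ℝ))) * h2
    _ ≤ _ := by gcongr

theorem one_add_log_add_le {X A : ℝ} (hX : 2 ≤ X) (hA : 0 ≤ A) :
    1 + Real.log (X + A) ≤ (1 + (1 + Real.log (1 + A)) / Real.log 2) * Real.log X := by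
  have h2 : 0 < Real.log 2 := Real.log_pos (by norm_num)
  have hlog : Real.log 2 ≤ Real.log X := Real.log_le_log (by norm_num) hX
  have hA0 : 0 ≤ Real.log (1 + A) := Real.log_nonneg (by linarith)
  have hsum : Real.log (X + A) ≤ Real.log X + Real.log (1 + A) := by
    rw [← Real.log_mul (by linarith) (by linarith)]
    exact Real.log_le_log (by linarith) (by nlinarith)
  have h3 : 1 + Real.log (1 + A) ≤ (1 + Real.log (1 + A)) / Real.log 2 * Real.log X := by
    rw [div_mul_eq_mul_div, le_div_iff₀ h2]
    gcongr
  linarith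

open scoped Classical in
/-- **Lemma 2.10.** Fix `ℓ ≥ 1` and distinct integers `a₁, …, a_ℓ`. For `X ≥ 2`,
an integer `1 ≤ h ≤ X` with `h ≠ a_j` for all `j`, and a set `I ⊆ [1,X]` of
primes, letting `N` be the set of positive integers with no prime factor in `I`,
`∑_{n≤X} 1_N(n+h)·Λ(n+a₁)⋯Λ(n+a_ℓ)
  ≪ X·∏_j (|h−a_j|/φ(|h−a_j|))^{2^{ℓ+1}}·∏_{p∈I}(1 − 1/p)`. -/
theorem correlation_primes_sifted_bound (ℓ : ℕ) (hℓ : 1 ≤ ℓ) (a : Fin ℓ → ℤ)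
    (hdistinct : Function.Injective a) :
    ∃ K : ℝ, 0 < K ∧ ∀ X : ℝ, 2 ≤ X → ∀ h : ℤ, 1 ≤ h → (h : ℝ) ≤ X →
      (∀ j, h ≠ a j) → ∀ I : Finset ℕ,
      (∀ p ∈ I, p.Prime ∧ (p : ℝ) ≤ X) →
      ∑ n ∈ Icc 1 ⌊X⌋₊,
        (if ∀ p ∈ I, ¬ (p : ℤ) ∣ ((n : ℤ) + h) then (1 : ℝ) else 0) *
          ∏ j, Λ (((n : ℤ) + a j).toNat)
      ≤ K * (X * (∏ j, totientRatio (h - a j) ^ (2 ^ (ℓ + 1))) *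
          ∏ p ∈ I, (1 - 1 / (p : ℝ))) := by
  set A : ℕ := ∑ j, (a j).natAbs with hA
  have haA : ∀ j, (a j).natAbs ≤ A := fun j =>
    single_le_sum (f := fun j => (a j).natAbs) (fun _ _ => Nat.zero_le _) (mem_univ j)
  set B : ℕ := 2 * (ℓ + 1) + 2 * A with hB
  set s : ℕ := 8 * (ℓ + 1) + 1 with hs
  set C : ℝ := 1 + (1 + Real.log (1 + A)) / Real.log 2 with hC
  have hC0 : 0 ≤ C := by
    have : 0 ≤ Real.log (1 + (A : ℝ)) := Real.log_nonneg (by simp)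
    have : 0 ≤ Real.log 2 := Real.log_nonneg (by norm_num)
    positivity
  set K₁ : ℝ := 2 * (C * (12 * s * B)) ^ ℓ * (B * Real.exp (4 * (12 * s))) with hK₁
  set K₂ : ℝ := (1 + 2 * ℓ) * C ^ (ℓ + 1) * ((4 * (ℓ + 1 : ℕ)) ^ (ℓ + 1) * Real.exp 16) with hK₂
  have hK₁0 : 0 ≤ K₁ := by positivity
  have hK₂0 : 0 ≤ K₂ := by positivity
  refine ⟨K₁ + K₂ + 1, by linarith, fun X hX h _ _ hha I hI => ?_⟩
  have hX0 : 0 < X := by linarith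
  have hlogX : 0 < Real.log X := Real.log_pos (by linarith)
  have hs0 : (0 : ℝ) < s := by positivity
  set z : ℝ := X ^ (1 / (12 * s) : ℝ) with hz
  have hz1 : 1 < z := Real.one_lt_rpow (by linarith) (by positivity)
  have hlogz : Real.log z = Real.log X / (12 * s) := by
    rw [hz, Real.log_rpow hX0]
    ring
  have hratio : Real.log X / Real.log z = 12 * s := by
    rw [hlogz]
    field_simp
  have hzpow : (z ^ s) ^ 6 = X ^ (1 / 2 : ℝ) := by
    rw [← pow_mul, hz, ← Real.rpow_natCast, ← Real.rpow_mul hX0.le]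
    congr 1
    push_cast
    field_simp
    norm_num
  have hzle : z ≤ X ^ (1 / 2 : ℝ) := by
    rw [← hzpow, ← pow_mul]
    exact le_self_pow₀ hz1.le (by lia)
  set Y : ℝ := X + A with hY
  have hY1 : 1 ≤ Y := by linarith [Nat.cast_nonneg (α := ℝ) A]
  have hN : ∀ j, ∀ n ∈ Icc 1 ⌊X⌋₊, ((((n : ℤ) + a j).toNat : ℕ) : ℝ) ≤ Y := by
    intro j n hn
    have h1 : ((n : ℤ) + a j).toNat ≤ n + A := by
      have := haA j
      lia
    have h2 : (n : ℝ) ≤ X := (Nat.le_floor_iff hX0.le).1 (mem_Icc.1 hn).2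
    calc ((((n : ℤ) + a j).toNat : ℕ) : ℝ) ≤ n + A := by exact_mod_cast h1
      _ ≤ Y := by linarith
  have hm : ∀ j, h - a j ≠ 0 := fun j => sub_ne_zero.2 (hha j)
  have hdvd : ∀ p : ℕ, B < p → ∀ i j, (p : ℤ) ∣ a i - a j → i = j := by
    intro p hp i j hij
    refine hdistinct (sub_eq_zero.1 (Int.eq_zero_of_abs_lt_dvd hij ?_))
    have h1 := haA i
    have h2 := haA j
    rw [abs_lt]
    constructor <;> lia
  have hcount := card_sifted_shifts_le a h I hm hℓ hz1 (by linarith) hI (B := B) (s := s) (by lia)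
    hdvd le_rfl ⌊X⌋₊
  rw [hratio, hzpow, hlogz] at hcount
  have hsum := sum_correlation_le a h I (B := B) (by linarith : 0 ≤ z) hY1 hN
  set T := ∏ j, totientRatio (h - a j) with hT
  set T' := ∏ j, totientRatio (h - a j) ^ (2 ^ (ℓ + 1)) with hT'
  set W := ∏ p ∈ I, (1 - 1 / (p : ℝ)) with hW
  set L := 1 + Real.log Y with hL
  have hL1 : 1 ≤ L := by linarith [Real.log_nonneg hY1]
  have hLC : L ≤ C * Real.log X := one_add_log_add_le hX (Nat.cast_nonneg A)
  have hW0 : 0 ≤ W := prod_nonneg fun p hp => (one_sub_inv_pos_of_prime (hI p hp).1).le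
  have hT1 : ∀ j, 1 ≤ totientRatio (h - a j) := fun j => one_le_totientRatio (hm j)
  have hTT' : T ≤ T' := prod_le_prod (fun j _ => zero_le_one.trans (hT1 j)) fun j _ =>
    le_self_pow₀ (hT1 j) (by positivity)
  have hT'1 : 1 ≤ T' := one_le_prod fun j _ => one_le_pow₀ (hT1 j)
  have hT0 : 0 ≤ T := prod_nonneg fun j _ => zero_le_one.trans (hT1 j)
  have hmain : L ^ ℓ * (2 * ⌊X⌋₊ * ((B / (Real.log X / (12 * s))) ^ ℓ *
      (B * Real.exp (4 * (12 * s)) * T * W))) ≤ K₁ * (X * T' * W) := by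
    calc L ^ ℓ * (2 * ⌊X⌋₊ * ((B / (Real.log X / (12 * s))) ^ ℓ *
          (B * Real.exp (4 * (12 * s)) * T * W)))
        ≤ (C * Real.log X) ^ ℓ * (2 * X * ((B / (Real.log X / (12 * s))) ^ ℓ *
          (B * Real.exp (4 * (12 * s)) * T' * W))) := by
          gcongr
          exact Nat.floor_le hX0.le
      _ = 2 * (C * Real.log X * (B / (Real.log X / (12 * s)))) ^ ℓ *
          (B * Real.exp (4 * (12 * s))) * (X * T' * W) := by
          rw [mul_pow (C * Real.log X)]
          ring
      _ = K₁ * (X * T' * W) := by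
          rw [hK₁]
          congr 4
          field_simp
  have herror : L ^ ℓ * (X ^ (1 / 2 : ℝ) + ℓ * (z * (2 * L))) ≤ K₂ * (X * T' * W) := by
    calc L ^ ℓ * (X ^ (1 / 2 : ℝ) + ℓ * (z * (2 * L)))
        ≤ L ^ ℓ * (X ^ (1 / 2 : ℝ) * L + ℓ * (X ^ (1 / 2 : ℝ) * (2 * L))) := by
          gcongr
          exact le_mul_of_one_le_right (by positivity) hL1
      _ = (1 + 2 * ℓ) * (L ^ (ℓ + 1) * X ^ (1 / 2 : ℝ)) := by ring
      _ ≤ (1 + 2 * ℓ) * ((C * Real.log X) ^ (ℓ + 1) * X ^ (1 / 2 : ℝ)) := by gcongr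
      _ = (1 + 2 * ℓ) * C ^ (ℓ + 1) * (Real.log X ^ (ℓ + 1) * X ^ (1 / 2 : ℝ)) := by
          rw [mul_pow]
          simp only [mul_assoc]
      _ ≤ (1 + 2 * ℓ) * C ^ (ℓ + 1) *
          ((4 * (ℓ + 1 : ℕ)) ^ (ℓ + 1) * Real.exp 16 * (X * W)) := by
          exact mul_le_mul_of_nonneg_left (pow_log_mul_sqrt_le hX hI (Nat.le_add_left 1 ℓ))
            (by positivity)
      _ = K₂ * (X * 1 * W) := by
          rw [hK₂]
          ring
      _ ≤ K₂ * (X * T' * W) := by gcongr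
  have hnonneg : 0 ≤ X * T' * W := by positivity
  calc _ ≤ _ := hsum
    _ ≤ L ^ ℓ * (2 * ⌊X⌋₊ * ((B / (Real.log X / (12 * s))) ^ ℓ *
          (B * Real.exp (4 * (12 * s)) * T * W)) + X ^ (1 / 2 : ℝ) + ℓ * (z * (2 * L))) := by
        gcongr
    _ ≤ (K₁ + K₂ + 1) * (X * T' * W) := by linarith
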